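/- arXiv:1907.07499 — 3 statements merged into one kernel-verified Lean document; each statement's English description precedes it below -/
import Mathlib

section
/- Let S₁,…,S_N be an iterated function scheme of similitudes on ℝ^d satisfying the open set condition, with attractor K, and let qᵢ denote the unique fixed point of Sᵢ. If qᵢ = q_j for indices i,j ∈ {1,…,N}, then i = j. -/
/-- Composition of the maps of an IFS along a finite word:
`Sw S [w₁, …, wₙ] = S w₁ ∘ ⋯ ∘ S wₙ`. -/
def Sw {N d : ℕ} (S : Fin N → EuclideanSpace ℝ (Fin d) → EuclideanSpace ℝ (Fin d)) :
    List (Fin N) → EuclideanSpace ℝ (Fin d) → EuclideanSpace ℝ (Fin d)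
  | [] => id
  | a :: w => S a ∘ Sw S w

/-!
Suppose that two of the maps, `f` and `g`, with different indices, both fix `p`. Then `P = f ∘ g`
and `Q = g ∘ f` also fix `p`, they have the same ratio, and the images of the open set under `P` and
`Q` are disjoint. The maps `P⁻ⁿ ∘ Qⁿ` are isometries fixing `p`, so the points `P⁻ⁿ (Qⁿ x)` stay on
a sphere about `p`, and by compactness two of them, for exponents `m < n`, are as close as we like.
Hence `Qⁿ x = Pⁿ⁻ᵐ (Qᵐ y)` for some `y` near `x`. If `x` lies in the open set, then so does `y`, and
`Qⁿ x` lies in both images, a contradiction.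

Inverses exist because a similitude of `ℝ^d` is surjective: rescaled and translated it becomes an
isometry fixing `0`, and the same compactness argument shows that its orbits are recurrent.
-/

open Function Set

section Recurrence

theorem exists_lt_dist_lt_of_isBounded {X : Type*} [PseudoMetricSpace X] [ProperSpace X]
    {s : Set X} (hs : Bornology.IsBounded s) {u : ℕ → X} (hu : ∀ n, u n ∈ s)
    {ε : ℝ} (hε : 0 < ε) : ∃ m n, m < n ∧ dist (u m) (u n) < ε := by
  obtain ⟨_, -, φ, hφ, hlim⟩ := tendsto_subseq_of_bounded hs hu
  obtain ⟨M, hM⟩ := Metric.cauchySeq_iff.1 hlim.cauchySeq ε hε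
  exact ⟨φ M, φ (M + 1), hφ M.lt_succ_self, hM M le_rfl (M + 1) M.le_succ⟩

theorem isometry_iterate {X : Type*} [PseudoEMetricSpace X] {T : X → X} (hT : Isometry T) :
    ∀ n : ℕ, Isometry T^[n]
  | 0 => isometry_id
  | n + 1 => (isometry_iterate hT n).comp hT

theorem surjective_of_isometry_of_isFixedPt {X : Type*} [MetricSpace X] [ProperSpace X]
    {T : X → X} (hT : Isometry T) {p : X} (hp : IsFixedPt T p) : Surjective T := by
  intro y
  -- Recurrence puts `y` in the closure of the range, which is closed because `X` is complete.
  suffices y ∈ closure (range T) by rwa [hT.isClosedEmbedding.isClosed_range.closure_eq] at this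
  refine Metric.mem_closure_iff.2 fun ε hε ↦ ?_
  have orbit_mem (n : ℕ) : T^[n] y ∈ Metric.closedBall p (dist y p) := by
    rw [Metric.mem_closedBall, ← (isometry_iterate hT n).dist_eq y p, (hp.iterate n).eq]
  obtain ⟨m, n, hmn, hdist⟩ :=
    exists_lt_dist_lt_of_isBounded Metric.isBounded_closedBall orbit_mem hε
  obtain ⟨k, rfl⟩ := Nat.exists_eq_add_of_lt hmn
  rw [add_assoc, iterate_add_apply, (isometry_iterate hT m).dist_eq, iterate_succ_apply'] at hdist
  exact ⟨_, mem_range_self _, hdist⟩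

end Recurrence

section NormedSpace

variable {E : Type*} [NormedAddCommGroup E] [NormedSpace ℝ E] [ProperSpace E]

theorem dilation_surjective (f : E →ᵈ E) : Surjective f := by
  have hr : (Dilation.ratio f : ℝ) ≠ 0 := NNReal.coe_ne_zero.2 (Dilation.ratio_ne_zero f)
  let T : E → E := fun y ↦ (Dilation.ratio f : ℝ)⁻¹ • (f y - f 0)
  have hT : Isometry T := Isometry.of_dist_eq fun x y ↦ by
    rw [dist_smul₀, dist_sub_right, Dilation.dist_eq, norm_inv, NNReal.norm_eq,
      inv_mul_cancel_left₀ hr]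
  have hT0 : IsFixedPt T 0 := by simp [IsFixedPt, T]
  intro z
  obtain ⟨y, hy⟩ :=
    surjective_of_isometry_of_isFixedPt hT hT0 ((Dilation.ratio f : ℝ)⁻¹ • (z - f 0))
  exact ⟨y, sub_left_injective (smul_right_injective E (inv_ne_zero hr) hy)⟩

theorem exists_dilationEquiv_coe_eq (f : E →ᵈ E) : ∃ e : E ≃ᵈ E, ⇑e = f :=
  ⟨{ Equiv.ofBijective f ⟨Dilation.injective f, dilation_surjective f⟩ with
      edist_eq' := f.edist_eq' }, rfl⟩

end NormedSpace

section Ratio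

theorem isometry_of_ratio_eq_one {X Y F : Type*} [PseudoEMetricSpace X] [PseudoEMetricSpace Y]
    [FunLike F X Y] [DilationClass F X Y] {f : F} (hf : Dilation.ratio f = 1) : Isometry f :=
  fun x y ↦ by rw [Dilation.edist_eq, hf, ENNReal.coe_one, one_mul]

variable {X : Type*} [PseudoEMetricSpace X]

theorem ratio_inv_mul_eq_one {e e' : X ≃ᵈ X} (h : Dilation.ratio e = Dilation.ratio e') :
    Dilation.ratio (e⁻¹ * e') = 1 := by
  rw [DilationEquiv.mul_def, DilationEquiv.ratio_trans, DilationEquiv.ratio_inv, h,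
    mul_inv_cancel₀ (Dilation.ratio_ne_zero e')]

theorem ratio_mul_comm (e e' : X ≃ᵈ X) : Dilation.ratio (e * e') = Dilation.ratio (e' * e) := by
  simp only [DilationEquiv.mul_def, DilationEquiv.ratio_trans, mul_comm]

theorem isometry_inv_pow_mul_pow {P Q : X ≃ᵈ X} (hPQ : Dilation.ratio P = Dilation.ratio Q)
    (n : ℕ) : Isometry ((P ^ n)⁻¹ * Q ^ n) :=
  isometry_of_ratio_eq_one <| ratio_inv_mul_eq_one <| by simp only [DilationEquiv.ratio_pow, hPQ]

end Ratio

section CommonFixedPoint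

variable {X : Type*} [PseudoMetricSpace X] [ProperSpace X] {O : Set X} {p : X}

theorem exists_lt_dist_inv_pow_mul_pow_lt {P Q : X ≃ᵈ X}
    (hPQ : Dilation.ratio P = Dilation.ratio Q) (hP : IsFixedPt P p) (hQ : IsFixedPt Q p)
    (x : X) {ε : ℝ} (hε : 0 < ε) :
    ∃ m n, m < n ∧ dist (((P ^ m)⁻¹ * Q ^ m) x) (((P ^ n)⁻¹ * Q ^ n) x) < ε := by
  refine exists_lt_dist_lt_of_isBounded (Metric.isBounded_closedBall (x := p) (r := dist x p))
    (fun n ↦ ?_) hε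
  have hfix : ((P ^ n)⁻¹ * Q ^ n) p = p := by
    rw [DilationEquiv.coe_mul, comp_apply, DilationEquiv.coe_inv, DilationEquiv.symm_apply_eq,
      DilationEquiv.coe_pow, DilationEquiv.coe_pow, (hQ.iterate n).eq, (hP.iterate n).eq]
  rw [Metric.mem_closedBall, ← (isometry_inv_pow_mul_pow hPQ n).dist_eq x p, hfix]

theorem exists_dist_lt_pow_apply_pow_eq_pow {P Q : X ≃ᵈ X}
    (hPQ : Dilation.ratio P = Dilation.ratio Q) (hP : IsFixedPt P p) (hQ : IsFixedPt Q p)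
    (x : X) {ε : ℝ} (hε : 0 < ε) :
    ∃ y, dist x y < ε ∧ ∃ k m : ℕ, (P ^ (k + 1)) ((Q ^ m) y) = (Q ^ (m + k + 1)) x := by
  obtain ⟨m, n, hmn, hdist⟩ := exists_lt_dist_inv_pow_mul_pow_lt hPQ hP hQ x hε
  obtain ⟨k, rfl⟩ := Nat.exists_eq_add_of_lt hmn
  let h : X ≃ᵈ X := (Q ^ m)⁻¹ * P ^ m
  have hh : Isometry h := isometry_inv_pow_mul_pow hPQ.symm m
  have hx : h * ((P ^ m)⁻¹ * Q ^ m) = 1 := by simp only [h]; group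
  have hy : P ^ (k + 1) * (Q ^ m * (h * ((P ^ (m + k + 1))⁻¹ * Q ^ (m + k + 1)))) =
      Q ^ (m + k + 1) := by simp only [h]; group
  refine ⟨(h * ((P ^ (m + k + 1))⁻¹ * Q ^ (m + k + 1))) x, ?_, k, m, DFunLike.congr_fun hy x⟩
  rwa [← hh.dist_eq, show h (((P ^ m)⁻¹ * Q ^ m) x) = x from DFunLike.congr_fun hx x] at hdist

theorem image_inter_image_nonempty_of_ratio_eq {P Q : X ≃ᵈ X}
    (hPQ : Dilation.ratio P = Dilation.ratio Q) (hP : IsFixedPt P p) (hQ : IsFixedPt Q p)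
    (hO : IsOpen O) (hne : O.Nonempty) (hPO : MapsTo P O O) (hQO : MapsTo Q O O) :
    (P '' O ∩ Q '' O).Nonempty := by
  obtain ⟨x, hx⟩ := hne
  obtain ⟨ε, hε, hball⟩ := Metric.isOpen_iff.1 hO x hx
  obtain ⟨y, hxy, k, m, heq⟩ := exists_dist_lt_pow_apply_pow_eq_pow hPQ hP hQ x hε
  have hy : y ∈ O := hball (Metric.mem_ball'.2 hxy)
  simp only [DilationEquiv.coe_pow] at heq
  refine ⟨Q^[m + k + 1] x, ?_, ?_⟩
  · rw [← heq, iterate_succ_apply']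
    exact mem_image_of_mem P (hPO.iterate k (hQO.iterate m hy))
  · rw [iterate_succ_apply']
    exact mem_image_of_mem Q (hQO.iterate (m + k) hx)

theorem image_inter_image_nonempty_of_isFixedPt {f g : X ≃ᵈ X}
    (hf : IsFixedPt f p) (hg : IsFixedPt g p)
    (hO : IsOpen O) (hne : O.Nonempty) (hfO : MapsTo f O O) (hgO : MapsTo g O O) :
    (f '' O ∩ g '' O).Nonempty := by
  refine (image_inter_image_nonempty_of_ratio_eq (P := f * g) (Q := g * f) (ratio_mul_comm f g)
    (hf.comp hg) (hg.comp hf) hO hne (hfO.comp hgO) (hgO.comp hfO)).mono ?_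
  rw [DilationEquiv.coe_mul, DilationEquiv.coe_mul, image_comp, image_comp]
  exact inter_subset_inter (image_mono hgO.image_subset) (image_mono hfO.image_subset)

end CommonFixedPoint

theorem fixed_points_distinct_general {ι E : Type*} [NormedAddCommGroup E] [NormedSpace ℝ E]
    [ProperSpace E] (S : ι → E →ᵈ E) {O : Set E} (hne : O.Nonempty) (hO : IsOpen O)
    (hSO : ∀ i, MapsTo (S i) O O) (hdisj : Pairwise fun i j ↦ Disjoint (S i '' O) (S j '' O))
    {q : ι → E} (hq : ∀ i, IsFixedPt (S i) (q i)) : Injective q := by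
  intro i j hij
  by_contra hij_ne
  choose e he using fun k ↦ exists_dilationEquiv_coe_eq (S k)
  simp only [← he] at hSO hdisj hq
  exact (image_inter_image_nonempty_of_isFixedPt (hq i) (hij ▸ hq j) hO hne (hSO i)
    (hSO j)).not_disjoint (hdisj hij_ne)

/-- if the IFS of similitudes satisfies the OSC and `q i` denotes the
(unique) fixed point of `S i`, then `q i = q j` implies `i = j`. -/
theorem fixed_points_distinct {d N : ℕ} (hN : 2 ≤ N)
    (S : Fin N → EuclideanSpace ℝ (Fin d) → EuclideanSpace ℝ (Fin d))
    (c : Fin N → ℝ) (hc : ∀ i, c i ∈ Set.Ioo (0 : ℝ) 1)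
    (hS : ∀ i x y, dist (S i x) (S i y) = c i * dist x y)
    (K : Set (EuclideanSpace ℝ (Fin d))) (hKne : K.Nonempty) (hKcomp : IsCompact K)
    (hK : K = ⋃ i, S i '' K)
    (O : Set (EuclideanSpace ℝ (Fin d))) (hOne : O.Nonempty) (hOopen : IsOpen O)
    (hObdd : Bornology.IsBounded O) (hOsub : (⋃ i, S i '' O) ⊆ O)
    (hOdisj : Pairwise fun i j => Disjoint (S i '' O) (S j '' O))
    (q : Fin N → EuclideanSpace ℝ (Fin d)) (hq : ∀ i, S i (q i) = q i) :
    ∀ i j : Fin N, q i = q j → i = j := by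
  exact fixed_points_distinct_general
    (fun i ↦ Dilation.mkOfDistEq (S i) ⟨⟨c i, (hc i).1.le⟩, ne_of_gt (hc i).1, hS i⟩)
    hOne hOopen (fun i ↦ mapsTo_iff_image_subset.2 (iUnion_subset_iff.1 hOsub i)) hOdisj hq
end

section
/- Let S₁,…,S_N be an IFS of similitudes on ℝ^d satisfying the OSC and the nesting property, with attractor K. For every finite word u over 𝒜 = {1,…,N} and every letter a ∈ 𝒜, the set S_{ua}(K) ∩ S_u(F₀) is contained in the singleton {S_u(q_a)}; if moreover q_a ∈ F₀, then S_{ua}(K) ∩ S_u(F₀) = {S_u(q_a)}. -/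
/-- The set of essential fixed points `F₀`: those fixed points `q i` which are mapped,
by some pair of maps of the IFS, onto a different fixed point's image. -/
def F0 {N d : ℕ} (S : Fin N → EuclideanSpace ℝ (Fin d) → EuclideanSpace ℝ (Fin d))
    (q : Fin N → EuclideanSpace ℝ (Fin d)) : Set (EuclideanSpace ℝ (Fin d)) :=
  {x | x ∈ Set.range q ∧ ∃ i j : Fin N, ∃ y, y ∈ Set.range q ∧ x ≠ y ∧ S i x = S j y}

/-!
The point is that `S a '' K` contains no fixed point `q b` other than `q a`; everything else follows
by applying the injective map `Sw S u`. Suppose `q b ∈ S a '' K` with `q b ≠ q a`. By nesting,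
`q b = S a (q e)` for some `e`. For every `j` choose `m` so that `(S b)⁻ʲ ∘ S a ∘ (S e)ᵐ` has ratio
comparable to that of `S a`. These maps all send `q e` to `q b`, so the images of a point `x ∈ O`
stay in a fixed ball; but the images of `O` are pairwise disjoint, and each contains a ball of fixed
radius about the image of `x`, which is impossible in a proper space.
-/

open Set Function Metric Dilation
open scoped NNReal

theorem exists_lt_dist_lt_of_isBounded_range {X : Type*} [PseudoMetricSpace X] [ProperSpace X]
    {u : ℕ → X} (hu : Bornology.IsBounded (range u)) {ε : ℝ} (hε : 0 < ε) :
    ∃ i j, i < j ∧ dist (u i) (u j) < ε := by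
  obtain ⟨_, -, φ, hφ, hlim⟩ := tendsto_subseq_of_bounded hu mem_range_self
  obtain ⟨n, hn⟩ := Metric.cauchySeq_iff.1 hlim.cauchySeq ε hε
  exact ⟨φ n, φ (n + 1), hφ n.lt_succ_self, hn n le_rfl (n + 1) n.le_succ⟩

theorem mem_of_isFixedPt_of_mapsTo {X : Type*} [MetricSpace X] {κ : ℝ≥0} {f : X → X}
    (hf : ContractingWith κ f) {K : Set X} (hK : IsComplete K) (hKne : K.Nonempty)
    (hfK : MapsTo f K K) {x : X} (hx : IsFixedPt f x) : x ∈ K := by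
  obtain ⟨y, hy⟩ := hKne
  obtain ⟨z, hzK, hz, -⟩ := (hf.restrict hfK).exists_fixedPoint' hK hfK hy (edist_ne_top _ _)
  rwa [hf.fixedPoint_unique' hx hz]

section DilationEquiv

variable {X : Type*}

theorem dilationEquiv_image_ball {Y : Type*} [PseudoMetricSpace X] [PseudoMetricSpace Y]
    (T : X ≃ᵈ Y) (x : X) (δ : ℝ) : T '' ball x δ = ball (T x) (ratio T * δ) := by
  refine (mapsTo_ball T x δ).image_subset.antisymm fun y hy ↦ ⟨T.symm y, ?_, T.apply_symm_apply y⟩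
  rw [mem_ball, ← T.apply_symm_apply y, dist_eq T] at hy
  exact lt_of_mul_lt_mul_left hy (ratio T).coe_nonneg

theorem pairwise_disjoint_image_pow_inv_mul [PseudoEMetricSpace X] {f g : X ≃ᵈ X} {O : Set X}
    (hf : MapsTo f O O) (hg : MapsTo g O O) (hfg : Disjoint (g '' O) (f '' O)) :
    Pairwise fun i j : ℕ ↦ Disjoint (⇑((f ^ i)⁻¹ * g) '' O) (⇑((f ^ j)⁻¹ * g) '' O) := by
  refine (pairwise_disjoint_on _).2 fun i j hij ↦ Set.disjoint_left.2 ?_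
  rintro _ ⟨y, hy, rfl⟩ ⟨z, hz, hzy⟩
  obtain ⟨k, rfl⟩ := Nat.exists_eq_add_of_lt hij
  have hgz : g z = f (f^[k] (g y)) := calc
    g z = (f ^ (i + k + 1) * ((f ^ (i + k + 1))⁻¹ * g)) z := by rw [mul_inv_cancel_left]
    _ = (f ^ (i + k + 1) * ((f ^ i)⁻¹ * g)) y := congrArg (f ^ (i + k + 1)) hzy
    _ = (f * f ^ k * g) y := by
      congr 1
      group
    _ = f (f^[k] (g y)) := by simp only [DilationEquiv.coe_mul, DilationEquiv.coe_pow, comp_apply]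
  exact Set.disjoint_left.1 hfg (mem_image_of_mem g hz)
    (hgz ▸ mem_image_of_mem f (hf.iterate k (hg hy)))

theorem exists_ratio_pow_inv_mul_pow_mem_Icc [PseudoEMetricSpace X] {f e : X ≃ᵈ X}
    (hf : ratio f ≤ 1) (he : ratio e < 1) (g : X ≃ᵈ X) (j : ℕ) :
    ∃ m : ℕ, ratio ((f ^ j)⁻¹ * g * e ^ m) ∈ Icc (ratio g) (ratio g / ratio e) := by
  have hf₀ : 0 < ratio f ^ j := pow_pos (ratio_pos f) j
  have he₀ : 0 < ratio e := ratio_pos e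
  obtain ⟨m, hm_lt, hm_le⟩ :=
    exists_nat_pow_near_of_lt_one hf₀ (pow_le_one₀ zero_le hf) he₀ he
  have hratio : ratio ((f ^ j)⁻¹ * g * e ^ m) = ratio g * (ratio e ^ m / ratio f ^ j) := by
    simp only [DilationEquiv.mul_def, DilationEquiv.ratio_trans, DilationEquiv.ratio_inv,
      DilationEquiv.ratio_pow]
    ring
  refine ⟨m, ?_⟩
  rw [hratio, mem_Icc]
  constructor
  · exact le_mul_of_one_le_right' ((one_le_div hf₀).2 hm_le)
  · rw [div_eq_mul_inv (ratio g)]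
    gcongr
    rw [div_le_iff₀ hf₀, inv_mul_eq_div, le_div_iff₀ he₀, ← pow_succ]
    exact hm_lt.le

theorem not_disjoint_image_of_isFixedPt [PseudoMetricSpace X] [ProperSpace X] {f g e : X ≃ᵈ X}
    (hf : ratio f ≤ 1) (he : ratio e < 1) {O : Set X} (hO : IsOpen O) (hOne : O.Nonempty)
    (hfO : MapsTo f O O) (hgO : MapsTo g O O) (heO : MapsTo e O O) {r : X} (hr : IsFixedPt e r)
    (hgr : IsFixedPt f (g r)) : ¬Disjoint (g '' O) (f '' O) := by
  intro hfg
  obtain ⟨x, hx⟩ := hOne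
  obtain ⟨δ, hδ, hball⟩ := Metric.isOpen_iff.1 hO x hx
  choose m hm_lower hm_upper using exists_ratio_pow_inv_mul_pow_mem_Icc hf he g
  let T : ℕ → X ≃ᵈ X := fun j ↦ (f ^ j)⁻¹ * g * e ^ m j
  have hTr (j : ℕ) : T j r = g r := by
    have her : (e ^ m j) r = r := by rw [DilationEquiv.coe_pow]; exact hr.iterate _
    have hfgr : (f ^ j) (g r) = g r := by rw [DilationEquiv.coe_pow]; exact hgr.iterate _
    change (f ^ j).symm (g ((e ^ m j) r)) = g r
    rw [her, DilationEquiv.symm_apply_eq, hfgr]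
  have hTO (j : ℕ) : T j '' O ⊆ ⇑((f ^ j)⁻¹ * g) '' O := by
    rw [DilationEquiv.coe_mul _ (e ^ m j), image_comp, DilationEquiv.coe_pow]
    exact image_mono (heO.iterate _).image_subset
  have hbdd : Bornology.IsBounded (range fun j ↦ T j x) := by
    refine isBounded_closedBall.subset (range_subset_iff.2 fun j ↦ ?_ :
      _ ⊆ closedBall (g r) (↑(ratio g / ratio e) * dist x r))
    rw [mem_closedBall, ← hTr j, dist_eq (T j)]
    gcongr
    exact hm_upper j
  obtain ⟨i, j, hij, hdist⟩ := exists_lt_dist_lt_of_isBounded_range hbdd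
    (mul_pos (NNReal.coe_pos.2 (ratio_pos g)) hδ)
  have hmem : T i x ∈ T j '' O := by
    refine image_mono hball ?_
    rw [dilationEquiv_image_ball, mem_ball]
    exact hdist.trans_le (by gcongr; exact hm_lower j)
  exact Set.disjoint_left.1 (pairwise_disjoint_image_pow_inv_mul hfO hgO hfg hij.ne)
    (hTO i (mem_image_of_mem _ hx)) (hTO j hmem)

end DilationEquiv

section Similitude

theorem injective_of_dist_eq_mul {X Y : Type*} [MetricSpace X] [PseudoMetricSpace Y] {f : X → Y}
    {c : ℝ} (hc : c ≠ 0) (hf : ∀ x y, dist (f x) (f y) = c * dist x y) : Injective f :=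
  fun x y hxy ↦ dist_eq_zero.1 <|
    (mul_eq_zero.1 (by rw [← hf, hxy, dist_self])).resolve_left hc

variable {E : Type*} [NormedAddCommGroup E] [NormedSpace ℝ E] [FiniteDimensional ℝ E]
  [StrictConvexSpace ℝ E]

theorem surjective_of_dist_eq_mul {f : E → E} {c : ℝ} (hc : 0 < c)
    (hf : ∀ x y, dist (f x) (f y) = c * dist x y) : Surjective f := by
  have hiso : Isometry fun x ↦ c⁻¹ • f x := Isometry.of_dist_eq fun x y ↦ by
    rw [dist_smul₀, hf, Real.norm_of_nonneg (inv_nonneg.2 hc.le), inv_mul_cancel_left₀ hc.ne']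
  have : Inhabited E := ⟨0⟩
  have hsurj : Surjective fun x ↦ c⁻¹ • f x :=
    (hiso.affineIsometryOfStrictConvexSpace.toAffineIsometryEquiv rfl).surjective
  intro y
  obtain ⟨x, hx⟩ := hsurj (c⁻¹ • y)
  exact ⟨x, smul_right_injective E (inv_ne_zero hc.ne') hx⟩

theorem exists_dilationEquiv_of_dist_eq_mul [Nontrivial E] {f : E → E} {c : ℝ} (hc : 0 < c)
    (hf : ∀ x y, dist (f x) (f y) = c * dist x y) :
    ∃ T : E ≃ᵈ E, ⇑T = f ∧ (ratio T : ℝ) = c := by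
  lift c to ℝ≥0 using hc.le
  let D : E →ᵈ E := mkOfDistEq f ⟨c, (NNReal.coe_pos.1 hc).ne', hf⟩
  let T : E ≃ᵈ E :=
    { D with
      toEquiv := .ofBijective D
        ⟨injective_of_dist_eq_mul hc.ne' hf, surjective_of_dist_eq_mul hc hf⟩ }
  obtain ⟨x, y, hxy⟩ := exists_pair_ne E
  have hratio : c = ratio T := ratio_unique_of_dist_ne_zero (dist_ne_zero.2 hxy) (hf x y)
  exact ⟨T, rfl, NNReal.coe_inj.2 hratio.symm⟩

theorem image_inter_range_fixedPoint_eq_singleton {ι : Type*} {S : ι → E → E} {c : ι → ℝ}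
    (hc : ∀ i, c i ∈ Ioo (0 : ℝ) 1) (hS : ∀ i x y, dist (S i x) (S i y) = c i * dist x y)
    {q : ι → E} (hq : ∀ i, IsFixedPt (S i) (q i)) {K : Set E} (hqK : ∀ i, q i ∈ K)
    {O : Set E} (hOne : O.Nonempty) (hO : IsOpen O) (hSO : ∀ i, MapsTo (S i) O O)
    (hOdisj : Pairwise fun i j ↦ Disjoint (S i '' O) (S j '' O))
    (hnest : ∀ a b, a ≠ b → S a '' K ∩ S b '' K ⊆ S a '' range q) (a : ι) :
    S a '' K ∩ range q = {q a} := by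
  refine Subset.antisymm ?_ (singleton_subset_iff.2 ⟨⟨q a, hqK a, hq a⟩, mem_range_self a⟩)
  rintro _ ⟨hbK, b, rfl⟩
  by_contra hba
  have hab : a ≠ b := fun h ↦ hba (h ▸ rfl)
  obtain ⟨_, ⟨e, rfl⟩, hae⟩ := hnest a b hab ⟨hbK, q b, hqK b, hq b⟩
  have hfix : IsFixedPt (S b) (S a (q e)) := hae ▸ hq b
  have : Nontrivial E := nontrivial_of_ne _ _ hba
  choose T hT hratio using fun i ↦ exists_dilationEquiv_of_dist_eq_mul (hc i).1 (hS i)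
  have hlt (i : ι) : ratio (T i) < 1 := by
    rw [← NNReal.coe_lt_one, hratio]
    exact (hc i).2
  obtain rfl : S = fun i ↦ ⇑(T i) := funext fun i ↦ (hT i).symm
  exact not_disjoint_image_of_isFixedPt (hlt b).le (hlt e) hO hOne (hSO b) (hSO a) (hSO e) (hq e)
    hfix (hOdisj hab)

end Similitude

section Words

variable {d N : ℕ} (S : Fin N → EuclideanSpace ℝ (Fin d) → EuclideanSpace ℝ (Fin d))

theorem F0_subset_range (q : Fin N → EuclideanSpace ℝ (Fin d)) : F0 S q ⊆ range q :=
  fun _ hx ↦ hx.1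

theorem Sw_append (u v : List (Fin N)) : Sw S (u ++ v) = Sw S u ∘ Sw S v := by
  induction u with
  | nil => rfl
  | cons a u ih => simp only [List.cons_append, Sw, ih, comp_assoc]

variable {S}

theorem Sw_injective (hS : ∀ i, Injective (S i)) (u : List (Fin N)) : Injective (Sw S u) := by
  induction u with
  | nil => exact injective_id
  | cons a u ih => exact (hS a).comp ih

end Words

theorem cell_meets_parent_boundary_general {d N : ℕ}
    {S : Fin N → EuclideanSpace ℝ (Fin d) → EuclideanSpace ℝ (Fin d)}
    {c : Fin N → ℝ} (hc : ∀ i, c i ∈ Ioo (0 : ℝ) 1)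
    (hS : ∀ i x y, dist (S i x) (S i y) = c i * dist x y)
    {K : Set (EuclideanSpace ℝ (Fin d))} (hKne : K.Nonempty) (hK : IsClosed K)
    (hSK : ∀ i, MapsTo (S i) K K)
    {O : Set (EuclideanSpace ℝ (Fin d))} (hOne : O.Nonempty) (hO : IsOpen O)
    (hSO : ∀ i, MapsTo (S i) O O)
    (hOdisj : Pairwise fun i j ↦ Disjoint (S i '' O) (S j '' O))
    {q : Fin N → EuclideanSpace ℝ (Fin d)} (hq : ∀ i, S i (q i) = q i)
    (hnest : ∀ a b, a ≠ b → S a '' K ∩ S b '' K ⊆ S a '' range q)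
    (u : List (Fin N)) (a : Fin N) :
    Sw S (u ++ [a]) '' K ∩ Sw S u '' range q = {Sw S u (q a)} := by
  have hcontr (i : Fin N) : ContractingWith ⟨c i, (hc i).1.le⟩ (S i) :=
    ⟨(hc i).2, LipschitzWith.of_dist_le_mul fun x y ↦ (hS i x y).le⟩
  have hqK (i : Fin N) : q i ∈ K :=
    mem_of_isFixedPt_of_mapsTo (hcontr i) hK.isComplete hKne (hSK i) (hq i)
  have hinj (i : Fin N) : Injective (S i) :=
    injective_of_dist_eq_mul (hc i).1.ne' (hS i)
  rw [Sw_append, image_comp, ← image_inter (Sw_injective hinj u)]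
  change Sw S u '' (S a '' K ∩ range q) = _
  rw [image_inter_range_fixedPoint_eq_singleton hc hS hq hqK hOne hO hSO hOdisj hnest,
    image_singleton]

/-- Lemma 2.6: the cell S_{ua}(K) meets S_u(F₀) in at most the point
S_u(q_a), and exactly in that point when q_a ∈ F₀. -/
theorem cell_meets_parent_boundary {d N : ℕ} (hN : 2 ≤ N)
    (S : Fin N → EuclideanSpace ℝ (Fin d) → EuclideanSpace ℝ (Fin d))
    (c : Fin N → ℝ) (hc : ∀ i, c i ∈ Set.Ioo (0 : ℝ) 1)
    (hS : ∀ i x y, dist (S i x) (S i y) = c i * dist x y)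
    (K : Set (EuclideanSpace ℝ (Fin d))) (hKne : K.Nonempty) (hKcomp : IsCompact K)
    (hK : K = ⋃ i, S i '' K)
    (O : Set (EuclideanSpace ℝ (Fin d))) (hOne : O.Nonempty) (hOopen : IsOpen O)
    (hObdd : Bornology.IsBounded O) (hOsub : (⋃ i, S i '' O) ⊆ O)
    (hOdisj : Pairwise fun i j => Disjoint (S i '' O) (S j '' O))
    (q : Fin N → EuclideanSpace ℝ (Fin d)) (hq : ∀ i, S i (q i) = q i)
    (hnest : ∀ v w : List (Fin N), v.length = w.length → v ≠ w →
      Sw S v '' K ∩ Sw S w '' K = Sw S v '' F0 S q ∩ Sw S w '' F0 S q) :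
    ∀ (u : List (Fin N)) (a : Fin N),
      Sw S (u ++ [a]) '' K ∩ Sw S u '' F0 S q ⊆ {Sw S u (q a)} ∧
      (q a ∈ F0 S q → Sw S (u ++ [a]) '' K ∩ Sw S u '' F0 S q = {Sw S u (q a)}) := by
  have hnest_letter (a b : Fin N) (hab : a ≠ b) : S a '' K ∩ S b '' K ⊆ S a '' range q :=
    (hnest [a] [b] rfl (by simpa using hab)).subset.trans
      (inter_subset_left.trans (image_mono (F0_subset_range S q)))
  have hmeet (u : List (Fin N)) (a : Fin N) :=
    cell_meets_parent_boundary_general hc hS hKne hKcomp.isClosed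
      (fun i ↦ mapsTo_iff_image_subset.2 (iUnion_subset_iff.1 hK.ge i)) hOne hOopen
      (fun i ↦ mapsTo_iff_image_subset.2 (iUnion_subset_iff.1 hOsub i)) hOdisj hq
      hnest_letter u a
  intro u a
  have hsub : Sw S (u ++ [a]) '' K ∩ Sw S u '' F0 S q ⊆ {Sw S u (q a)} :=
    (inter_subset_inter_right _ (image_mono (F0_subset_range S q))).trans (hmeet u a).subset
  exact ⟨hsub, fun hqa ↦ hsub.antisymm
    (singleton_subset_iff.2 ⟨((hmeet u a).ge rfl).1, mem_image_of_mem _ hqa⟩)⟩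
end

section
/- For every word w ∈ 𝒲, the Green function satisfies g(∅,w) = m(w). -/
open Classical

namespace Martin

/-- Finite words over the alphabet `Fin N` (the empty list is the empty word `∅`;
`w ++ [i]` is the word `wi` and `w.dropLast` is the parent `w⁻`). -/
abbrev Word (N : ℕ) := List (Fin N)

/-- The mass of a word: `m(w₁⋯wₙ) = m(w₁)⋯m(wₙ)`, `m(∅) = 1`. -/
noncomputable def mW {N : ℕ} (m : Fin N → ℝ) (w : Word N) : ℝ := (w.map m).prod

/-- Total mass of the equivalence class of `v`: `Σ_{v̂ ∼ v} m(v̂)`. -/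
noncomputable def massCl {N : ℕ} (sim : Word N → Word N → Prop) (m : Fin N → ℝ)
    (v : Word N) : ℝ :=
  ∑ᶠ u ∈ {u : Word N | sim u v}, mW m u

/-- Transition probability: `p(v,w) = m(w)/(Σ_{v̂∼v} m(v̂))` if `w = v̂i` for some
`v̂ ∼ v`, `i ∈ 𝒜`, and `0` otherwise. -/
noncomputable def pTrans {N : ℕ} (sim : Word N → Word N → Prop) (m : Fin N → ℝ)
    (v w : Word N) : ℝ :=
  if ∃ v' : Word N, ∃ i : Fin N, sim v' v ∧ w = v' ++ [i] then mW m w / massCl sim m v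
  else 0

/-- `n`-step transition probabilities: `p₀(v,w) = δ_v(w)`,
`pₙ(v,w) = Σ_u pₙ₋₁(v,u) p(u,w)`. -/
noncomputable def pn {N : ℕ} (sim : Word N → Word N → Prop) (m : Fin N → ℝ) :
    ℕ → Word N → Word N → ℝ
  | 0, v, w => if w = v then 1 else 0
  | n + 1, v, w => ∑ᶠ u : Word N, pn sim m n v u * pTrans sim m u w

/-- The Green function `g(v,w) = p_{|w|−|v|}(v,w)` (it equals `0` when `|w| < |v|`,
by truncated subtraction and since then `v ≠ w`). -/
noncomputable def green {N : ℕ} (sim : Word N → Word N → Prop) (m : Fin N → ℝ)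
    (v w : Word N) : ℝ :=
  pn sim m (w.length - v.length) v w

/-- The function `q(v,w) = g(v,w)·(Σ_{v̂∼v} m(v̂))/m(w)` for `v ≠ w`, `q(v,v) = 1`. -/
noncomputable def qfun {N : ℕ} (sim : Word N → Word N → Prop) (m : Fin N → ℝ)
    (v w : Word N) : ℝ :=
  if v = w then 1 else green sim m v w * massCl sim m v / mW m w

/-- The Martin kernel `k(v,w) = g(v,w)/g(∅,w)`. -/
noncomputable def mkernel {N : ℕ} (sim : Word N → Word N → Prop) (m : Fin N → ℝ)
    (v w : Word N) : ℝ :=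
  green sim m v w / green sim m [] w

/-- `R(w)`: the number of words equivalent to `w`. -/
noncomputable def Rnum {N : ℕ} (sim : Word N → Word N → Prop) (w : Word N) : ℕ :=
  Set.ncard {u : Word N | sim u w}

/-- Assumption (B2): for every word `w`, either all equivalent words have the same mass,
or all equivalent words have equivalent parents. -/
def B2 {N : ℕ} (sim : Word N → Word N → Prop) (m : Fin N → ℝ) : Prop :=
  ∀ w : Word N, (∀ w', sim w' w → mW m w' = mW m w) ∨
    (∀ w', sim w' w → sim w'.dropLast w.dropLast)


theorem mW_pos {N : ℕ} {m : Fin N → ℝ} (hm : ∀ a, 0 < m a) (w : Word N) : 0 < mW m w :=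
  List.prod_pos (List.forall_mem_map.2 fun a _ => hm a)

section

variable {N : ℕ} {sim : Word N → Word N → Prop} {m : Fin N → ℝ}

theorem finite_setOf_sim (hlen : ∀ v w : Word N, sim v w → v.length = w.length) (v : Word N) :
    {u : Word N | sim u v}.Finite :=
  (List.finite_length_eq (Fin N) v.length).subset fun u hu => hlen u v hu

theorem massCl_pos (hrefl : ∀ v, sim v v)
    (hlen : ∀ v w : Word N, sim v w → v.length = w.length) (hm : ∀ a, 0 < m a) (v : Word N) :
    0 < massCl sim m v := by
  have hfin := finite_setOf_sim hlen v
  rw [massCl, finsum_mem_eq_finite_toFinset_sum _ hfin]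
  exact Finset.sum_pos (fun u _ => mW_pos hm u) ⟨v, hfin.mem_toFinset.2 (hrefl v)⟩

theorem massCl_congr (hsim : Equivalence sim) {u v : Word N} (huv : sim u v) :
    massCl sim m u = massCl sim m v := by
  have hclass : {x | sim x u} = {x | sim x v} :=
    Set.ext fun _ => ⟨fun hx => hsim.trans hx huv, fun hx => hsim.trans hx (hsim.symm huv)⟩
  rw [massCl, massCl, hclass]

theorem exists_sim_and_append_singleton_eq_iff (hsymm : ∀ ⦃u v⦄, sim u v → sim v u)
    {u v : Word N} {i : Fin N} :
    (∃ v' j, sim v' u ∧ v ++ [i] = v' ++ [j]) ↔ sim u v := by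
  constructor
  · rintro ⟨v', j, hv'u, heq⟩
    obtain rfl : v = v' := List.append_inj_left' heq rfl
    exact hsymm hv'u
  · exact fun huv => ⟨v, i, hsymm huv, rfl⟩

theorem pTrans_append_singleton (hsim : Equivalence sim) (u v : Word N) (i : Fin N) :
    pTrans sim m u (v ++ [i]) =
      if sim u v then mW m (v ++ [i]) / massCl sim m v else 0 := by
  rw [pTrans, exists_sim_and_append_singleton_eq_iff (sim := sim) fun _ _ => hsim.symm]
  split_ifs with huv
  · rw [massCl_congr hsim huv]
  · rfl

theorem pn_succ_append_singleton (hsim : Equivalence sim) (n : ℕ) (x v : Word N) (i : Fin N) :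
    pn sim m (n + 1) x (v ++ [i]) =
      (∑ᶠ u ∈ {u : Word N | sim u v}, pn sim m n x u) *
        (mW m (v ++ [i]) / massCl sim m v) := by
  simp only [pn, pTrans_append_singleton hsim, finsum_mul, finsum_eq_if, Set.mem_ofPred_eq,
    mul_ite, ite_mul, mul_zero, zero_mul]

theorem green_append_singleton (hsim : Equivalence sim)
    (hlen : ∀ v w : Word N, sim v w → v.length = w.length) {x v : Word N}
    (hxv : x.length ≤ v.length) (i : Fin N) :
    green sim m x (v ++ [i]) =
      (∑ᶠ u ∈ {u : Word N | sim u v}, green sim m x u) *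
        (mW m (v ++ [i]) / massCl sim m v) := by
  have hsteps : (v ++ [i]).length - x.length = (v.length - x.length) + 1 := by
    rw [List.length_append, List.length_singleton, Nat.sub_add_comm hxv]
  rw [green, hsteps, pn_succ_append_singleton hsim]
  congr 1
  refine finsum_mem_congr rfl fun u hu => ?_
  rw [green, hlen u v hu]

/-- By induction on `|w|`: if `g(∅,u) = m(u)` for all `u ∼ v`, then the sum of `g(∅,·)` over the
class of `v` is the denominator of `p(v,vi)`, so the two cancel in the recursion for `g(∅,vi)`. -/
theorem green_empty_general (hsim : Equivalence sim)
    (hlen : ∀ v w : Word N, sim v w → v.length = w.length)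
    (hmass : ∀ v, massCl sim m v ≠ 0) (w : Word N) :
    green sim m [] w = mW m w := by
  induction hn : w.length generalizing w with
  | zero =>
    obtain rfl := List.length_eq_zero_iff.1 hn
    simp [green, pn, mW]
  | succ n ih =>
    obtain ⟨v, i, rfl⟩ : ∃ v i, w = v ++ [i] := by
      simpa [List.ne_nil_of_length_eq_add_one hn] using List.eq_nil_or_concat w
    have hv : v.length = n := by simpa using hn
    have hsum : ∑ᶠ u ∈ {u : Word N | sim u v}, green sim m [] u = massCl sim m v :=
      finsum_mem_congr rfl fun u hu => ih u ((hlen u v hu).trans hv)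
    calc green sim m [] (v ++ [i])
      _ = (∑ᶠ u ∈ {u : Word N | sim u v}, green sim m [] u) *
            (mW m (v ++ [i]) / massCl sim m v) :=
          green_append_singleton hsim hlen (Nat.zero_le _) i
      _ = massCl sim m v * (mW m (v ++ [i]) / massCl sim m v) := by rw [hsum]
      _ = mW m (v ++ [i]) := mul_div_cancel₀ _ (hmass v)

end

/-- Theorem 3.6: `g(∅,w) = m(w)` for every word `w`. -/
theorem green_empty {N : ℕ} (hN : 2 ≤ N)
    (sim : Word N → Word N → Prop) (hsim : Equivalence sim)
    (hlen : ∀ v w : Word N, sim v w → v.length = w.length)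
    (m : Fin N → ℝ) (hm : ∀ a, m a ∈ Set.Ioo (0 : ℝ) 1)
    (hm1 : ∑ a, m a = 1) :
    ∀ w : Word N, green sim m ([] : Word N) w = mW m w :=
  green_empty_general hsim hlen fun v =>
    (massCl_pos hsim.refl hlen (fun a => (hm a).1) v).ne'

end Martin
end
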